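/- Partition ℕ = {0,1,2,…} into consecutive finite blocks B_1, B_2, B_3, …, where B_k consists of exactly k consecutive integers (B_1 = {0}, B_2 = {1,2}, B_3 = {3,4,5}, and so on). Let T be the bounded linear operator on ℓ²(ℕ, ℂ) defined on the canonical orthonormal basis (e_j)_{j∈ℕ} by T e_j = 2 e_{j−1} if j and j−1 lie in the same block, and T e_j = 0 if j is the least element of its block. Then T is norm-unimodal. -/

import Mathlib

open Filter Topology MeasureTheory
open scoped Classical ENNReal

noncomputable def distFreq {X : Type*} [MetricSpace X] (f : X → X) (x y : X) (τ : ℝ) (n : ℕ) : ℝ :=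
  (((Finset.range n).filter fun i => dist (f^[i] x) (f^[i] y) < τ).card : ℝ) / n

def DistributionallyChaoticPair {X : Type*} [MetricSpace X] (f : X → X) (x y : X) : Prop :=
  (∀ τ : ℝ, 0 < τ → Filter.limsup (distFreq f x y τ) Filter.atTop = 1) ∧
  (∃ ε : ℝ, 0 < ε ∧ Filter.liminf (distFreq f x y ε) Filter.atTop = 0)

def DistributionallyChaotic {X : Type*} [MetricSpace X] (f : X → X) : Prop :=
  ∃ Λ : Set X, ¬Λ.Countable ∧
    ∀ x ∈ Λ, ∀ y ∈ Λ, x ≠ y → DistributionallyChaoticPair f x y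

def LiYorkePair {X : Type*} [MetricSpace X] (f : X → X) (x y : X) : Prop :=
  0 < Filter.limsup (fun n => edist (f^[n] x) (f^[n] y)) Filter.atTop ∧
  Filter.liminf (fun n => edist (f^[n] x) (f^[n] y)) Filter.atTop = 0

def LiYorkeChaotic {X : Type*} [MetricSpace X] (f : X → X) : Prop :=
  ∃ Γ : Set X, ¬Γ.Countable ∧ ∀ x ∈ Γ, ∀ y ∈ Γ, x ≠ y → LiYorkePair f x y

def NormUnimodal {X : Type*} [NormedAddCommGroup X] [NormedSpace ℂ X] (T : X →L[ℂ] X) : Prop :=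
  ∃ r : ℝ, 1 < r ∧ ∀ m : ℕ, ∃ x : X, x ≠ 0 ∧
    Filter.Tendsto (fun k => ‖(T ^ k) x‖) Filter.atTop (nhds 0) ∧
    ∀ i : ℕ, 1 ≤ i → i ≤ m → r ^ i * ‖x‖ ≤ ‖(T ^ i) x‖

/-!
Going down a block from its largest element, `T` multiplies the norm by `2` at each step, and at the
least element it vanishes. The last basis vector of a block of length `m + 1` therefore has an orbit
that grows geometrically for `m` steps and is zero afterwards.
-/

theorem pow_apply_eq_prod_smul_of_chain {R M : Type*} [CommSemiring R] [AddCommMonoid M]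
    [Module R M] {T : Module.End R M} {u : ℕ → M} {c : ℕ → R} {n : ℕ}
    (hT : ∀ k < n, T (u k) = c k • u (k + 1)) :
    (T ^ n) (u 0) = (∏ k ∈ Finset.range n, c k) • u n := by
  induction n with
  | zero => simp
  | succ n ih =>
    rw [pow_succ', Module.End.mul_apply, ih fun k hk => hT k (hk.trans n.lt_succ_self), map_smul,
      hT n n.lt_succ_self, smul_smul, Finset.prod_range_succ]

section NormedSpace

variable {𝕜 X : Type*} [NormedField 𝕜] [SeminormedAddCommGroup X] [NormedSpace 𝕜 X]
  {T : X →L[𝕜] X}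

theorem norm_pow_apply_eq_of_chain {u : ℕ → X} {c : ℕ → 𝕜} {n : ℕ}
    (hT : ∀ k < n, T (u k) = c k • u (k + 1)) :
    ‖(T ^ n) (u 0)‖ = (∏ k ∈ Finset.range n, ‖c k‖) * ‖u n‖ := by
  have hpow : (T ^ n) (u 0) = (∏ k ∈ Finset.range n, c k) • u n := by
    simpa only [← ContinuousLinearMap.toLinearMap_pow, ContinuousLinearMap.coe_coe] using
      pow_apply_eq_prod_smul_of_chain (T := (T : X →ₗ[𝕜] X)) hT
  rw [hpow, norm_smul, norm_prod]

theorem tendsto_norm_pow_apply_zero_of_pow_apply_eq_zero {x : X} {n : ℕ} (hx : (T ^ n) x = 0) :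
    Tendsto (fun k => ‖(T ^ k) x‖) atTop (𝓝 0) := by
  refine tendsto_const_nhds.congr' ?_
  filter_upwards [eventually_ge_atTop n] with k hk
  rw [← Nat.sub_add_cancel hk, pow_add, mul_apply_eq_comp, hx, map_zero, norm_zero]

end NormedSpace

theorem not_triangular_of_mem_Ioc {m j : ℕ}
    (hj : j ∈ Set.Ioc (m * (m + 1) / 2) (m * (m + 1) / 2 + m)) :
    ¬∃ k : ℕ, j = k * (k + 1) / 2 := by
  rintro ⟨k, hk⟩
  have hmono : Monotone fun n : ℕ => n * (n + 1) / 2 := fun a b hab => by dsimp only; gcongr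
  have hnext : (m + 1) * (m + 1 + 1) / 2 = m * (m + 1) / 2 + (m + 1) := by
    simpa only [Nat.add_sub_cancel, mul_comm] using Nat.triangle_succ (m + 1)
  exact hmono.ne_of_lt_of_lt_nat m hj.1 (hnext ▸ Nat.lt_succ_of_le hj.2) k hk.symm

/-- At `j = 0` the subtraction truncates: `hT` then says `T (e 0) = w 0 • e 0`, and a unilateral
weighted backward shift is the case `w 0 = 0`. -/
theorem stmt_8_general {X : Type*} [NormedAddCommGroup X] [NormedSpace ℂ X] {T : X →L[ℂ] X}
    {e : ℕ → X} (he : ∀ j, ‖e j‖ = 1) {w : ℕ → ℂ} (hT : ∀ j, T (e j) = w j • e (j - 1))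
    {r : ℝ} (hr : 1 < r)
    (hw : ∀ m : ℕ, ∃ s : ℕ, w s = 0 ∧ ∀ j ∈ Set.Ioc s (s + m), r ≤ ‖w j‖) :
    NormUnimodal T := by
  refine ⟨r, hr, fun m => ?_⟩
  obtain ⟨s, hs, hr_le⟩ := hw m
  have norm_pow_apply (i : ℕ) :
      ‖(T ^ i) (e (s + m))‖ = ∏ k ∈ Finset.range i, ‖w (s + m - k)‖ := by
    simpa [he] using norm_pow_apply_eq_of_chain (T := T) (u := fun k => e (s + m - k))
      (c := fun k => w (s + m - k)) (n := i) fun k _ => hT (s + m - k)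
  have pow_apply_eq_zero : (T ^ (m + 1)) (e (s + m)) = 0 := by
    rw [← norm_eq_zero, norm_pow_apply]
    exact Finset.prod_eq_zero (Finset.self_mem_range_succ m) (by simp [hs])
  refine ⟨e (s + m), norm_ne_zero_iff.1 (by simp [he]),
    tendsto_norm_pow_apply_zero_of_pow_apply_eq_zero pow_apply_eq_zero, fun i _ him => ?_⟩
  calc r ^ i * ‖e (s + m)‖ = ∏ _k ∈ Finset.range i, r := by simp [he]
    _ ≤ ∏ k ∈ Finset.range i, ‖w (s + m - k)‖ := by
      refine Finset.prod_le_prod (fun _ _ => by positivity) fun k hk => hr_le _ ?_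
      rw [Finset.mem_range] at hk
      constructor <;> omega
    _ = ‖(T ^ i) (e (s + m))‖ := (norm_pow_apply i).symm

/-- Partition ℕ into consecutive blocks of sizes 1, 2, 3, …, so
that the least elements of the blocks are exactly the triangular numbers
k(k+1)/2.  The operator sending e_j to 2·e_{j-1} when j and j-1 lie in the
same block and e_j to 0 when j is the least element of its block is
norm-unimodal. -/
theorem stmt_8 (T : lp (fun _ : ℕ => ℂ) 2 →L[ℂ] lp (fun _ : ℕ => ℂ) 2)
    (hT : ∀ j : ℕ, T (lp.single 2 j (1 : ℂ)) =
      if ∃ k : ℕ, j = k * (k + 1) / 2 then 0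
      else (2 : ℂ) • lp.single 2 (j - 1) (1 : ℂ)) :
    NormUnimodal T := by
  refine stmt_8_general (e := fun j => lp.single 2 j 1)
    (w := fun j => if ∃ k : ℕ, j = k * (k + 1) / 2 then 0 else 2)
    (fun j => by simp [lp.norm_single]) (fun j => by simp only [hT, ite_smul, zero_smul])
    one_lt_two fun m => ⟨m * (m + 1) / 2, if_pos ⟨m, rfl⟩, fun j hj => ?_⟩
  simp [not_triangular_of_mem_Ioc hj]
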